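/- Let w₁, w₂ ∈ S_m and set B := N(w₁) ∩ N(w₂). Assume B is nonempty and pairwise orthogonal. Then there exist w₁', w₂' ∈ S_m with N(w₁) ⊆ N(w₁'), N(w₂) ⊆ N(w₂'), N(w₁') ∩ N(w₂') = B, and N(w₁') ∪ N(w₂') = {(i,j) | 1 ≤ i < j ≤ m}. -/

import Mathlib

/-- The inversion set `N(w) = {(i,j) | i < j, w⁻¹(i) > w⁻¹(j)}` of a permutation,
realizing `Φ⁺(w)` in type `A_{m−1}`. -/
def invSet (m : ℕ) (w : Equiv.Perm (Fin m)) : Finset (Fin m × Fin m) :=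
  Finset.univ.filter (fun p => p.1 < p.2 ∧ w⁻¹ p.2 < w⁻¹ p.1)

/-- A pair `(k, k+1)`, corresponding to a simple root. -/
def IsSimplePair {m : ℕ} (p : Fin m × Fin m) : Prop :=
  (p.1 : ℕ) + 1 = (p.2 : ℕ)

instance {m : ℕ} : DecidablePred (IsSimplePair (m := m)) :=
  fun p => inferInstanceAs (Decidable ((p.1 : ℕ) + 1 = (p.2 : ℕ)))

/-- Orthogonality of the roots `e_i − e_j` and `e_k − e_l`: `{i,j} ∩ {k,l} = ∅`. -/
def OrthPair {m : ℕ} (p q : Fin m × Fin m) : Prop :=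
  p.1 ≠ q.1 ∧ p.1 ≠ q.2 ∧ p.2 ≠ q.1 ∧ p.2 ≠ q.2

/-- A set of pairs is pairwise orthogonal. -/
def PairwiseOrth {m : ℕ} (B : Finset (Fin m × Fin m)) : Prop :=
  ∀ p ∈ B, ∀ q ∈ B, p ≠ q → OrthPair p q

/-!
Suppose a function `k` to a linear order is constant exactly on the blocks, i.e. on the pairs of `B`
and the remaining singletons. Sorting `{1, …, m}` by `k`, respectively by the reverse of `k`, and
placing the larger of two tied elements first gives two permutations whose inversion sets cover all
pairs and meet exactly in `B`. They enlarge `N(w₁)` and `N(w₂)` as soon as `k j ≤ k i` for every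
`(i, j) ∈ N(w₁)` and `k i ≤ k j` for every `(i, j) ∈ N(w₂)`.

Such a `k` exists because these prescribed precedences are acyclic between distinct blocks: every
nonempty union `T` of blocks contains a block that no other block of `T` has to precede. To find it,
look among the left-to-right maxima of `w₂⁻¹` on `T` that are not preceded from outside their block.
The block of the smallest such element `c` is as required: if `{c, d}` were preceded through `d`,
the previous left-to-right maximum would be a smaller choice.
-/

section Blocks

universe u

variable {α : Type u} {β γ : Type*} [LinearOrder α] [LinearOrder β] [LinearOrder γ]

/-- The pair `x < y` is inverted by both `p` and `q`. For `p = w₁⁻¹` and `q = w₂⁻¹` these are the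
elements of `N(w₁) ∩ N(w₂)`. -/
def CommonInversion (p : α → β) (q : α → γ) (x y : α) : Prop :=
  x < y ∧ p y < p x ∧ q y < q x

/-- Distinct common inversions are disjoint pairs, i.e. orthogonal roots. -/
def OrthogonalInversions (p : α → β) (q : α → γ) : Prop :=
  ∀ ⦃a b c d⦄, CommonInversion p q a b → CommonInversion p q c d →
    (a = c ∨ a = d ∨ b = c ∨ b = d) → a = c ∧ b = d

/-- The relation whose classes, for orthogonal common inversions, are the blocks: the common
inversions, viewed as two-element sets, and the remaining singletons. -/
def SameBlock (p : α → β) (q : α → γ) (x y : α) : Prop :=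
  x = y ∨ CommonInversion p q x y ∨ CommonInversion p q y x

/-- The precedence that the block order has to respect: an inversion of `q` keeps its natural
order, an inversion of `p` is reversed. -/
def Forced (p : α → β) (q : α → γ) (x y : α) : Prop :=
  (x < y ∧ q y < q x) ∨ (y < x ∧ p x < p y)

/-- A left-to-right maximum `c` of `q` on `T` such that no element of `T` outside the block of `c`
is forced to precede `c` (the other element of the block may still be preceded). -/
structure IsSourceRecord (p : α → β) (q : α → γ) (T : Set α) (c : α) : Prop where
  mem : c ∈ T
  lt_of_lt : ∀ y ∈ T, y < c → q y < q c
  sameBlock_of_forced : ∀ y ∈ T, Forced p q y c → SameBlock p q y c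

variable {p : α → β} {q : α → γ} {T : Set α} {c d x y : α}

theorem SameBlock.symm (h : SameBlock p q x y) : SameBlock p q y x :=
  h.imp Eq.symm Or.symm

theorem SameBlock.commonInversion_of_lt (h : SameBlock p q x y) (hxy : x < y) :
    CommonInversion p q x y := by
  rcases h with rfl | h | h
  · exact absurd hxy (lt_irrefl x)
  · exact h
  · exact absurd hxy h.1.asymm

theorem OrthogonalInversions.sameBlock_equivalence (ho : OrthogonalInversions p q) :
    Equivalence (SameBlock p q) where
  refl _ := Or.inl rfl
  symm := SameBlock.symm
  trans := by
    rintro x y z (rfl | hxy | hyx) (rfl | hyz | hzy)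
    · exact Or.inl rfl
    · exact Or.inr (Or.inl hyz)
    · exact Or.inr (Or.inr hzy)
    · exact Or.inr (Or.inl hxy)
    · exact absurd (ho hxy hyz (by simp)).1 hxy.1.ne
    · exact Or.inl (ho hxy hzy (by simp)).1
    · exact Or.inr (Or.inr hyx)
    · exact Or.inl (ho hyx hyz (by simp)).2
    · exact absurd (ho hyx hzy (by simp)).2 hyx.1.ne'

theorem Forced.sameBlock_of_le (hq : q.Injective) (h : Forced p q x y) (hle : q x ≤ q y) :
    SameBlock p q x y := by
  rcases h with ⟨-, hlt⟩ | ⟨hyx, hp⟩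
  · exact absurd hle hlt.not_ge
  · exact Or.inr (Or.inr ⟨hyx, hp, hle.lt_of_ne (hq.ne hyx.ne')⟩)

theorem Forced.lt_of_commonInversion (ho : OrthogonalInversions p q)
    (hcd : CommonInversion p q c d) (hxd : Forced p q x d) (hxc : ¬ Forced p q x c)
    (hne : x ≠ c) : x < c ∧ q d < q x := by
  rcases hxd with ⟨hxd, hqdx⟩ | ⟨hdx, hpxd⟩
  · refine ⟨hne.lt_or_gt.resolve_right fun hcx => ?_, hqdx⟩
    have hpxd : p x ≤ p d := le_of_not_gt fun hpdx => hne (ho ⟨hxd, hpdx, hqdx⟩ hcd (by simp)).1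
    exact hxc (Or.inr ⟨hcx, hpxd.trans_lt hcd.2.1⟩)
  · exact absurd (Or.inr ⟨hcd.1.trans hdx, hpxd.trans hcd.2.1⟩) hxc

theorem exists_isSourceRecord (hq : q.Injective) (hT : T.Finite) (hne : T.Nonempty) :
    ∃ c, IsSourceRecord p q T c := by
  obtain ⟨c, hc, hmax⟩ := Set.exists_max_image T q hT hne
  exact ⟨c, hc, fun y hy hyc => (hmax y hy).lt_of_ne (hq.ne hyc.ne),
    fun y hy h => h.sameBlock_of_le hq (hmax y hy)⟩

theorem IsSourceRecord.exists_lt (hp : p.Injective) (hq : q.Injective)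
    (ho : OrthogonalInversions p q) (hT : T.Finite) (hc : IsSourceRecord p q T c)
    (hcd : CommonInversion p q c d) (hx : x ∈ T) (hxd : Forced p q x d)
    (hxc : ¬ SameBlock p q x c) : ∃ b < c, IsSourceRecord p q T b := by
  obtain ⟨hxc_lt, hqdx⟩ := hxd.lt_of_commonInversion ho hcd
    (fun h => hxc (hc.sameBlock_of_forced x hx h)) (fun h => hxc (Or.inl h))
  obtain ⟨b, ⟨hbT, hbc⟩, hmax⟩ := Set.exists_max_image (T ∩ Set.Iio c) q
    (hT.subset Set.inter_subset_left) ⟨x, hx, hxc_lt⟩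
  have hbd : b < d := hbc.trans hcd.1
  have hpbd : p b < p d := by
    refine (lt_or_gt_of_ne (hp.ne hbd.ne)).resolve_right fun hpdb => hbc.ne ?_
    exact (ho ⟨hbd, hpdb, hqdx.trans_le (hmax x ⟨hx, hxc_lt⟩)⟩ hcd (by simp)).1
  refine ⟨b, hbc, hbT, fun y hy hyb => ?_, fun y hy hyb => ?_⟩
  · exact (hmax y ⟨hy, hyb.trans hbc⟩).lt_of_ne (hq.ne hyb.ne)
  · refine hyb.sameBlock_of_le hq ?_
    rcases hyb with ⟨hyb, -⟩ | ⟨-, hpyb⟩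
    · exact hmax y ⟨hy, hyb.trans hbc⟩
    have hpyd : p y < p d := hpyb.trans hpbd
    rcases lt_trichotomy y c with hyc | rfl | hcy
    · exact hmax y ⟨hy, hyc⟩
    · exact absurd hpyd hcd.2.1.asymm
    -- Otherwise `y` precedes `c`, so it is the partner `d` of `c`, contradicting `p y < p d`.
    · have hblock : SameBlock p q y c :=
        hc.sameBlock_of_forced y hy (Or.inr ⟨hcy, hpyd.trans hcd.2.1⟩)
      have hyd : y = d := (ho (hblock.symm.commonInversion_of_lt hcy) hcd (by simp)).2
      exact absurd (hyd ▸ hpyd) (lt_irrefl _)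

theorem exists_source_block (hp : p.Injective) (hq : q.Injective)
    (ho : OrthogonalInversions p q) (hT : T.Finite) (hne : T.Nonempty)
    (hsat : ∀ x ∈ T, ∀ y, SameBlock p q x y → y ∈ T) :
    ∃ c ∈ T, ∀ x ∈ T, ∀ d, SameBlock p q c d → Forced p q x d → SameBlock p q x c := by
  obtain ⟨c, hc, hmin⟩ := Set.exists_min_image {c | IsSourceRecord p q T c} id
    (hT.subset fun _ h => h.mem) (exists_isSourceRecord hq hT hne)
  refine ⟨c, hc.mem, fun x hx d hcd hxd => ?_⟩
  by_contra hxc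
  rcases hcd with rfl | hcd | hdc
  · exact hxc (hc.sameBlock_of_forced x hx hxd)
  · obtain ⟨b, hbc, hb⟩ := hc.exists_lt hp hq ho hT hcd hx hxd hxc
    exact (hmin b hb).not_gt hbc
  · have hd : d ∈ T := hsat c hc.mem d (Or.inr (Or.inr hdc))
    exact (hc.lt_of_lt d hd hdc.1).asymm hdc.2.2

/-- The partition into blocks, as a setoid so that the blocks form the quotient type. -/
def blockSetoid (ho : OrthogonalInversions p q) : Setoid α :=
  ⟨SameBlock p q, ho.sameBlock_equivalence⟩

/-- The precedence relation induced by `Forced` on distinct blocks. -/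
def BlockForced (ho : OrthogonalInversions p q) (X Y : Quotient (blockSetoid ho)) : Prop :=
  X ≠ Y ∧ ∃ x y, Quotient.mk _ x = X ∧ Quotient.mk _ y = Y ∧ Forced p q x y

theorem isWellFounded_blockForced [Finite α] (hp : p.Injective) (hq : q.Injective)
    (ho : OrthogonalInversions p q) : IsWellFounded _ (BlockForced ho) := by
  refine ⟨WellFounded.wellFounded_iff_has_min.mpr fun S ⟨X, hX⟩ => ?_⟩
  obtain ⟨c, hc, hsource⟩ := exists_source_block hp hq ho
    (Set.toFinite (Quotient.mk (blockSetoid ho) ⁻¹' S))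
    ((Set.nonempty_of_mem hX).preimage Quotient.mk_surjective)
    (fun x hx y hxy => by rwa [Set.mem_preimage, ← Quotient.sound (s := blockSetoid ho) hxy])
  refine ⟨_, hc, ?_⟩
  rintro _ hxS ⟨hne, x, d, rfl, hdc, hxd⟩
  exact hne (Quotient.sound (hsource x hxS d (Quotient.exact hdc.symm) hxd))

theorem exists_blockOrder [Finite α] (hp : p.Injective) (hq : q.Injective)
    (ho : OrthogonalInversions p q) :
    ∃ (κ : Type u) (_ : LinearOrder κ) (k : α → κ),
      (∀ x y, k x = k y ↔ SameBlock p q x y) ∧ ∀ x y, Forced p q x y → k x ≤ k y := by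
  classical
  have := isWellFounded_blockForced hp hq ho
  obtain ⟨s, hs, _⟩ := IsWellFounded.exists_well_order_ge (BlockForced ho)
  refine ⟨Quotient (blockSetoid ho), linearOrderOfSTO s, Quotient.mk _,
    fun _ _ => Quotient.eq, fun x y h => ?_⟩
  by_cases hxy : Quotient.mk (blockSetoid ho) x = Quotient.mk _ y
  · exact Or.inl hxy
  · exact Or.inr (hs _ _ ⟨hxy, x, y, rfl, rfl, h⟩)

end Blocks

section InversionSets

variable {m : ℕ}

theorem mem_invSet {w : Equiv.Perm (Fin m)} {x y : Fin m} :
    (x, y) ∈ invSet m w ↔ x < y ∧ w⁻¹ y < w⁻¹ x := by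
  simp [invSet]

theorem mem_invSet_inter_invSet {w₁ w₂ : Equiv.Perm (Fin m)} {x y : Fin m} :
    (x, y) ∈ invSet m w₁ ∩ invSet m w₂ ↔ CommonInversion ⇑w₁⁻¹ ⇑w₂⁻¹ x y := by
  rw [Finset.mem_inter, mem_invSet, mem_invSet, ← and_and_left, CommonInversion]

theorem PairwiseOrth.orthogonalInversions {w₁ w₂ : Equiv.Perm (Fin m)}
    (h : PairwiseOrth (invSet m w₁ ∩ invSet m w₂)) : OrthogonalInversions ⇑w₁⁻¹ ⇑w₂⁻¹ := by
  intro a b c d hab hcd hshared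
  by_contra hne
  have horth := h (a, b) (mem_invSet_inter_invSet.mpr hab) (c, d)
    (mem_invSet_inter_invSet.mpr hcd) (by simpa using hne)
  simp only [OrthPair] at horth
  tauto

theorem exists_perm_inv_lt_inv_iff {κ : Type*} [LinearOrder κ] {f : Fin m → κ}
    (hf : f.Injective) : ∃ w : Equiv.Perm (Fin m), ∀ x y, w⁻¹ x < w⁻¹ y ↔ f x < f y := by
  refine ⟨Tuple.sort f, fun x y => ?_⟩
  have hmono : StrictMono (f ∘ Tuple.sort f) :=
    (Tuple.monotone_sort f).strictMono_of_injective (hf.comp (Equiv.injective _))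
  simpa using (hmono.lt_iff_lt (a := (Tuple.sort f)⁻¹ x) (b := (Tuple.sort f)⁻¹ y)).symm

theorem exists_perm_mem_invSet_iff {κ : Type*} [LinearOrder κ] (k : Fin m → κ) :
    ∃ w : Equiv.Perm (Fin m), ∀ x y, (x, y) ∈ invSet m w ↔ x < y ∧ k y ≤ k x := by
  obtain ⟨w, hw⟩ := exists_perm_inv_lt_inv_iff (f := fun x => toLex (k x, OrderDual.toDual x))
    (fun _ _ h => congrArg (fun z : κ ×ₗ (Fin m)ᵒᵈ => OrderDual.ofDual (ofLex z).2) h)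
  refine ⟨w, fun x y => ?_⟩
  rw [mem_invSet, hw, Prod.Lex.toLex_lt_toLex, le_iff_lt_or_eq]
  simp only [OrderDual.toDual_lt_toDual]
  tauto

end InversionSets

/-- The general fill-up theorem: if `B = N(w₁) ∩ N(w₂)` is nonempty and pairwise
orthogonal, then `w₁, w₂` can be enlarged to `w₁', w₂'` whose inversion sets intersect
exactly in `B` and cover all positive roots. -/
theorem fillup_general {m : ℕ} (w₁ w₂ : Equiv.Perm (Fin m))
    (B : Finset (Fin m × Fin m)) (hB : B = invSet m w₁ ∩ invSet m w₂)
    (hne : B.Nonempty) (horth : PairwiseOrth B) :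
    ∃ w₁' w₂' : Equiv.Perm (Fin m),
      invSet m w₁ ⊆ invSet m w₁' ∧ invSet m w₂ ⊆ invSet m w₂' ∧
      invSet m w₁' ∩ invSet m w₂' = B ∧
      invSet m w₁' ∪ invSet m w₂' = Finset.univ.filter (fun p => p.1 < p.2) := by
  subst hB
  have ho := horth.orthogonalInversions
  obtain ⟨κ, _, k, hk, hforced⟩ := exists_blockOrder w₁⁻¹.injective w₂⁻¹.injective ho
  obtain ⟨v₁, hv₁⟩ := exists_perm_mem_invSet_iff k
  obtain ⟨v₂, hv₂⟩ : ∃ v : Equiv.Perm (Fin m), ∀ x y, (x, y) ∈ invSet m v ↔ x < y ∧ k x ≤ k y :=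
    exists_perm_mem_invSet_iff (OrderDual.toDual ∘ k)
  refine ⟨v₁, v₂, fun ⟨x, y⟩ h => ?_, fun ⟨x, y⟩ h => ?_, ?_, ?_⟩
  · obtain ⟨hxy, hinv⟩ := mem_invSet.mp h
    exact (hv₁ x y).mpr ⟨hxy, hforced y x (Or.inr ⟨hxy, hinv⟩)⟩
  · obtain ⟨hxy, hinv⟩ := mem_invSet.mp h
    exact (hv₂ x y).mpr ⟨hxy, hforced x y (Or.inl ⟨hxy, hinv⟩)⟩
  · ext ⟨x, y⟩
    rw [Finset.mem_inter, hv₁, hv₂, mem_invSet_inter_invSet]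
    constructor
    · rintro ⟨⟨hxy, hyx⟩, -, hle⟩
      exact ((hk x y).mp (hle.antisymm hyx)).commonInversion_of_lt hxy
    · intro h
      have hkxy : k x = k y := (hk x y).mpr (Or.inr (Or.inl h))
      exact ⟨⟨h.1, hkxy.ge⟩, h.1, hkxy.le⟩
  · ext ⟨x, y⟩
    simp [hv₁, hv₂, ← and_or_left, le_total]
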